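/- arXiv:1509.05309 — 2 statements merged into one kernel-verified Lean document; each statement's English description precedes it below -/
import Mathlib

section
/- The polynomial r(x) = x⁸ − 2x⁷ − x⁶ + 4x⁵ − 3x³ + x + 1 is irreducible over ℚ. Let K = ℚ[x]/(r(x)), let t be the image of x in K, and let 𝓞_K be the ring of integers of K. Then the principal ideal (t³ − t − 1) of 𝓞_K is a prime ideal of absolute norm 7, and the ideal (7) = 7𝓞_K factors as a product 𝒫₁𝒫₂𝒫₃ of three prime ideals of absolute norms 7, 7³ and 7⁴ respectively, with 𝒫₁ = (t³ − t − 1). -/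
open Polynomial

/-- The polynomial `r(x) = x⁸ − 2x⁷ − x⁶ + 4x⁵ − 3x³ + x + 1` over `ℚ`. -/
noncomputable def rK : ℚ[X] :=
  X ^ 8 - 2 * X ^ 7 - X ^ 6 + 4 * X ^ 5 - 3 * X ^ 3 + X + 1

namespace StmtAux

/-- integral version of `rK` -/
noncomputable def rZ : ℤ[X] :=
  X ^ 8 - 2 * X ^ 7 - X ^ 6 + 4 * X ^ 5 - 3 * X ^ 3 + X + 1

lemma rZ_natDegree : rZ.natDegree = 8 := by
  unfold rZ; compute_degree!

lemma rZ_monic : rZ.Monic := by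
  unfold rZ; monicity!

lemma rZ_map : rZ.map (algebraMap ℤ ℚ) = rK := by
  simp [rZ, rK]

lemma coeffs_quartic {F : Type*} [CommRing F] (f g : F[X]) (hf : f.Monic) (hg : g.Monic)
    (hf2 : f.natDegree = 2) (hg2 : g.natDegree = 2) :
    (f * g).coeff 3 = f.coeff 1 + g.coeff 1 ∧
    (f * g).coeff 2 = f.coeff 0 + f.coeff 1 * g.coeff 1 + g.coeff 0 ∧
    (f * g).coeff 1 = f.coeff 0 * g.coeff 1 + f.coeff 1 * g.coeff 0 ∧
    (f * g).coeff 0 = f.coeff 0 * g.coeff 0 := by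
  have h1 : f.coeff 2 = 1 := by rw [← hf2]; exact hf
  have h2 : g.coeff 2 = 1 := by rw [← hg2]; exact hg
  have h3 : f.coeff 3 = 0 := coeff_eq_zero_of_natDegree_lt (by omega)
  have h4 : g.coeff 3 = 0 := coeff_eq_zero_of_natDegree_lt (by omega)
  refine ⟨?_, ?_, ?_, ?_⟩ <;>
  simp [coeff_mul, Finset.Nat.antidiagonal_succ, h1, h2, h3, h4] <;> ring

lemma irr_quartic {F : Type*} [Field F] (p : F[X]) (hp : p.Monic) (hd : p.natDegree = 4)
    (hroot : ∀ a, p.eval a ≠ 0)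
    (hq : ∀ a b c d : F, p.coeff 3 = a + c → p.coeff 2 = b + a * c + d →
      p.coeff 1 = b * c + a * d → p.coeff 0 = b * d → False) : Irreducible p := by
  rw [hp.irreducible_iff_natDegree']
  refine ⟨by rintro rfl; simp at hd, ?_⟩
  intro f g hf hg hfg hmem
  rw [hd, Finset.mem_Ioc] at hmem
  have hdeg : f.natDegree + g.natDegree = 4 := by
    rw [← hf.natDegree_mul hg, hfg, hd]
  obtain h | h : g.natDegree = 1 ∨ g.natDegree = 2 := by omega
  · obtain ⟨x, hx⟩ := exists_root_of_degree_eq_one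
      (by rw [degree_eq_natDegree hg.ne_zero, h]; rfl : g.degree = 1)
    refine hroot x ?_
    rw [← hfg, eval_mul, hx.eq_zero, mul_zero]
  · obtain ⟨h1, h2, h3, h4⟩ := coeffs_quartic f g hf hg (by omega) h
    rw [hfg] at h1 h2 h3 h4
    exact hq _ _ _ _ h1 h2 h3 h4

instance : Fact (Nat.Prime 7) := ⟨by norm_num⟩

/-- the mod 3 quartic -/
noncomputable def q3 : (ZMod 3)[X] := X ^ 4 + 2 * X ^ 3 + 2 * X ^ 2 + X + 2

lemma q3_natDegree : q3.natDegree = 4 := by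
  unfold q3; compute_degree!

lemma q3_irr : Irreducible q3 := by
  refine irr_quartic q3 (by unfold q3; monicity!) q3_natDegree ?_ ?_
  · simp only [q3, eval_add, eval_mul, eval_pow, eval_X, eval_ofNat]
    decide
  · have e0 : q3.coeff 0 = 2 := by simp [q3, coeff_X]
    have e1 : q3.coeff 1 = 1 := by simp [q3, coeff_X]
    have e2 : q3.coeff 2 = 2 := by simp [q3, coeff_X]
    have e3 : q3.coeff 3 = 2 := by simp [q3, coeff_X]
    rw [e0, e1, e2, e3]
    decide

lemma rZ_map3 : rZ.map (Int.castRingHom (ZMod 3)) = q3 ^ 2 := by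
  have h3 : (3 : (ZMod 3)[X]) = 0 := by
    rw [← C_ofNat 3, show (OfNat.ofNat 3 : ZMod 3) = 0 from rfl, C_0]
  simp only [rZ, q3, Polynomial.map_add, Polynomial.map_sub, Polynomial.map_mul,
    Polynomial.map_pow, Polynomial.map_X, Polynomial.map_one, Polynomial.map_ofNat]
  linear_combination ((-1) * X ^ 0 + (-1) * X ^ 1 + (-3) * X ^ 2 + (-5) * X ^ 3 + (-4) * X ^ 4 + (-2) * X ^ 5 + (-3) * X ^ 6 + (-2) * X ^ 7) * h3

/-- Degree 1 factor modulo 7. -/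
noncomputable def g1 : (ZMod 7)[X] := X + 2
/-- Degree 3 factor modulo 7. -/
noncomputable def g2 : (ZMod 7)[X] := X ^ 3 + 4 * X ^ 2 + 5 * X + 5
/-- Degree 4 factor modulo 7. -/
noncomputable def g3 : (ZMod 7)[X] := X ^ 4 + 6 * X ^ 3 + 6 * X ^ 2 + X + 5

lemma g1_natDegree : g1.natDegree = 1 := by
  unfold g1; compute_degree!
lemma g2_natDegree : g2.natDegree = 3 := by
  unfold g2; compute_degree!
lemma g3_natDegree : g3.natDegree = 4 := by
  unfold g3; compute_degree!
lemma g1_monic : g1.Monic := by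
  unfold g1; monicity!
lemma g2_monic : g2.Monic := by
  unfold g2; monicity!
lemma g3_monic : g3.Monic := by
  unfold g3; monicity!

lemma g1_irr : Irreducible g1 := by
  apply irreducible_of_degree_eq_one
  rw [degree_eq_natDegree g1_monic.ne_zero, g1_natDegree]; rfl

lemma g2_irr : Irreducible g2 := by
  rw [irreducible_iff_roots_eq_zero_of_degree_le_three (by rw [g2_natDegree]; norm_num)
    (by rw [g2_natDegree])]
  rw [Multiset.eq_zero_iff_forall_notMem]
  intro a ha
  have h := (mem_roots'.1 ha).2
  simp only [g2, IsRoot.def, eval_add, eval_mul, eval_pow, eval_X, eval_ofNat] at h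
  revert a
  have : ∀ a : ZMod 7, a ^ 3 + 4 * a ^ 2 + 5 * a + 5 ≠ 0 := by decide
  intro a _ h
  exact this a h

lemma g3_irr : Irreducible g3 := by
  refine irr_quartic g3 g3_monic g3_natDegree ?_ ?_
  · simp only [g3, eval_add, eval_mul, eval_pow, eval_X, eval_ofNat]
    decide
  · have e0 : g3.coeff 0 = 5 := by simp [g3, coeff_X]
    have e1 : g3.coeff 1 = 1 := by simp [g3, coeff_X]
    have e2 : g3.coeff 2 = 6 := by simp [g3, coeff_X]
    have e3 : g3.coeff 3 = 6 := by simp [g3, coeff_X]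
    rw [e0, e1, e2, e3]
    intro a b c d h1 h2 h3 h4
    have hc : c = 6 - a := by rw [h1]; ring
    have hd : d = 6 - b - a * c := by rw [h2]; ring
    subst hc
    subst hd
    clear h1 h2
    revert a b
    decide

lemma rZ_map7 : rZ.map (Int.castRingHom (ZMod 7)) = g1 * g2 * g3 := by
  have h7 : (7 : (ZMod 7)[X]) = 0 := by
    rw [← C_ofNat 7, show (OfNat.ofNat 7 : ZMod 7) = 0 from rfl, C_0]
  simp only [rZ, g1, g2, g3, Polynomial.map_add, Polynomial.map_sub, Polynomial.map_mul,
    Polynomial.map_pow, Polynomial.map_X, Polynomial.map_one, Polynomial.map_ofNat]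
  linear_combination ((-7) * X ^ 0 + (-12) * X ^ 1 + (-20) * X ^ 2 + (-28) * X ^ 3 + (-27) * X ^ 4 + (-18) * X ^ 5 + (-8) * X ^ 6 + (-2) * X ^ 7) * h7

lemma no_quartic2 (f g : (ZMod 2)[X]) (hf : f.Monic) (hg : g.Monic)
    (hf4 : f.natDegree = 4) (hg4 : g.natDegree = 4)
    (h : f * g = rZ.map (Int.castRingHom (ZMod 2))) : False := by
  have f4 : f.coeff 4 = 1 := by rw [← hf4]; exact hf
  have g4 : g.coeff 4 = 1 := by rw [← hg4]; exact hg
  have f5 : ∀ n, 4 < n → f.coeff n = 0 := fun n hn => coeff_eq_zero_of_natDegree_lt (by omega)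
  have g5 : ∀ n, 4 < n → g.coeff n = 0 := fun n hn => coeff_eq_zero_of_natDegree_lt (by omega)
  have c : ∀ n, (f * g).coeff n = ((rZ.coeff n : ℤ) : ZMod 2) := by
    intro n; rw [h, coeff_map]; rfl
  have r0 : rZ.coeff 0 = 1 := by simp [rZ, coeff_X, coeff_one]
  have r1 : rZ.coeff 1 = 1 := by simp [rZ, coeff_X, coeff_one]
  have r2 : rZ.coeff 2 = 0 := by simp [rZ, coeff_X, coeff_one]
  have r3 : rZ.coeff 3 = -3 := by simp [rZ, coeff_X, coeff_one]
  have r4 : rZ.coeff 4 = 0 := by simp [rZ, coeff_X, coeff_one]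
  have r5 : rZ.coeff 5 = 4 := by simp [rZ, coeff_X, coeff_one]
  have r6 : rZ.coeff 6 = -1 := by simp [rZ, coeff_X, coeff_one]
  have r7 : rZ.coeff 7 = -2 := by simp [rZ, coeff_X, coeff_one]
  have c0 := c 0
  have c1 := c 1
  have c2 := c 2
  have c3 := c 3
  have c4 := c 4
  have c5 := c 5
  have c6 := c 6
  have c7 := c 7
  simp only [coeff_mul, Finset.Nat.antidiagonal_succ, Finset.sum_cons,
    Finset.Nat.antidiagonal_zero, Finset.map_singleton, Finset.sum_singleton, Finset.map_cons,
    Function.Embedding.prodMap, Function.Embedding.coeFn_mk, Prod.map,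
    Function.Embedding.refl_apply, Nat.succ_eq_add_one, Nat.reduceAdd,
    f4, g4, f5 5 (by norm_num), f5 6 (by norm_num), f5 7 (by norm_num),
    g5 5 (by norm_num), g5 6 (by norm_num), g5 7 (by norm_num),
    r0, r1, r2, r3, r4, r5, r6, r7] at c0 c1 c2 c3 c4 c5 c6 c7
  clear c r0 r1 r2 r3 r4 r5 r6 r7 h f4 g4 f5 g5 hf hg hf4 hg4
  generalize f.coeff 0 = a0 at *
  generalize f.coeff 1 = a1 at *
  generalize f.coeff 2 = a2 at *
  generalize f.coeff 3 = a3 at *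
  generalize g.coeff 0 = b0 at *
  generalize g.coeff 1 = b1 at *
  generalize g.coeff 2 = b2 at *
  generalize g.coeff 3 = b3 at *
  revert a0 a1 a2 a3 b0 b1 b2 b3
  decide

lemma rZ_irr : Irreducible rZ := by
  rw [rZ_monic.irreducible_iff_natDegree']
  refine ⟨fun h => by have := rZ_natDegree; rw [h] at this; simp at this, ?_⟩
  intro f g hf hg hfg hmem
  rw [rZ_natDegree, Finset.mem_Ioc] at hmem
  have hdeg : f.natDegree + g.natDegree = 8 := by
    rw [← hf.natDegree_mul hg, hfg, rZ_natDegree]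
  have hdvd : g.map (Int.castRingHom (ZMod 3)) ∣ q3 ^ 2 := by
    rw [← rZ_map3, ← hfg, Polynomial.map_mul]; exact dvd_mul_left _ _
  obtain ⟨i, hi, hass⟩ := (dvd_prime_pow q3_irr.prime 2).1 hdvd
  have hd3 := natDegree_eq_of_degree_eq (degree_eq_degree_of_associated hass)
  rw [natDegree_pow, q3_natDegree, hg.natDegree_map] at hd3
  have hg4 : g.natDegree = 4 := by omega
  refine no_quartic2 (f.map (Int.castRingHom (ZMod 2))) (g.map (Int.castRingHom (ZMod 2)))
    (hf.map _) (hg.map _) ?_ ?_ ?_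
  · rw [hf.natDegree_map]; omega
  · rw [hg.natDegree_map]; omega
  · rw [← Polynomial.map_mul, hfg]

lemma rK_irr : Irreducible rK := by
  rw [← rZ_map]
  exact rZ_monic.irreducible_iff_irreducible_map_fraction_map.1 rZ_irr

open NumberField

lemma exists_over (K : Type) [Field K] [NumberField K] (t : 𝓞 K)
    (hker : ∀ q : ℤ[X], aeval t q = 0 → rZ ∣ q)
    (g : (ZMod 7)[X]) (hg : Irreducible g)
    (hdvd : g ∣ rZ.map (Int.castRingHom (ZMod 7))) :
    ∃ Q : Ideal (𝓞 K), Q.IsMaximal ∧ (∀ q : ℤ[X], aeval t q ∈ Q ↔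
      g ∣ q.map (Int.castRingHom (ZMod 7))) ∧ 7 ^ g.natDegree ≤ Ideal.absNorm Q := by
  let φ : ℤ[X] →+* 𝓞 K := (aeval t : ℤ[X] →ₐ[ℤ] 𝓞 K).toRingHom
  let : Algebra ℤ[X] (𝓞 K) := φ.toAlgebra
  have : IsScalarTower ℤ ℤ[X] (𝓞 K) := IsScalarTower.of_algebraMap_eq (fun x => by
    change _ = aeval t (algebraMap ℤ ℤ[X] x)
    rw [AlgHom.commutes])
  have : Algebra.IsIntegral ℤ[X] (𝓞 K) :=
    ⟨fun x => (Algebra.IsIntegral.isIntegral (R := ℤ) x).tower_top⟩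
  have hsurj : Function.Surjective (mapRingHom (Int.castRingHom (ZMod 7))) :=
    map_surjective _ (ZMod.ringHom_surjective _)
  have : (Ideal.span {g}).IsPrime := (Ideal.span_singleton_prime hg.ne_zero).2 hg.prime
  obtain ⟨Q, -, hQ, hQc⟩ := Ideal.exists_ideal_over_prime_of_isIntegral
    (Ideal.comap (mapRingHom (Int.castRingHom (ZMod 7))) (Ideal.span {g})) (⊥ : Ideal (𝓞 K)) (by
      intro q hq
      have h0 : aeval t q = 0 := hq
      rw [Ideal.mem_comap, Ideal.mem_span_singleton]
      exact hdvd.trans ((mapRingHom (Int.castRingHom (ZMod 7))).map_dvd (hker q h0)))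
  have hmem : ∀ q : ℤ[X], aeval t q ∈ Q ↔ g ∣ q.map (Int.castRingHom (ZMod 7)) := by
    intro q
    have := SetLike.ext_iff.1 hQc q
    rw [Ideal.mem_comap, Ideal.mem_comap, Ideal.mem_span_singleton] at this
    exact this
  have h7 : (7 : 𝓞 K) ∈ Q := by
    have := (hmem (7 : ℤ[X])).2 (by
      rw [Polynomial.map_ofNat, ← C_ofNat 7, show (OfNat.ofNat 7 : ZMod 7) = 0 from rfl, C_0]
      exact dvd_zero _)
    rwa [map_ofNat] at this
  have hbot : Q ≠ ⊥ := by
    rintro rfl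
    rw [Ideal.mem_bot] at h7
    norm_num at h7
  refine ⟨Q, hQ.isMaximal hbot, hmem, ?_⟩
  have : Finite (𝓞 K ⧸ Q) := Ideal.finiteQuotientOfFreeOfNeBot Q hbot
  rw [Ideal.absNorm_apply, Submodule.cardQuot_apply]
  have hcard : Nat.card ((ZMod 7)[X] ⧸ Ideal.span {g}) = 7 ^ g.natDegree := by
    have : Module.Finite (ZMod 7) ((ZMod 7)[X] ⧸ Ideal.span {g}) :=
      (AdjoinRoot.powerBasis hg.ne_zero).finite
    rw [Module.natCard_eq_pow_finrank (K := ZMod 7), finrank_quotient_span_eq_natDegree,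
      Nat.card_zmod]
  rw [← hcard]
  have hs : Function.Surjective ((Ideal.Quotient.mk (Ideal.span {g})).comp
      (mapRingHom (Int.castRingHom (ZMod 7)))) := by
    rw [RingHom.coe_comp]
    exact Ideal.Quotient.mk_surjective.comp hsurj
  choose s hs using hs
  refine Nat.card_le_card_of_injective
    (fun y => Ideal.Quotient.mk Q (aeval t (s y))) ?_
  intro y z hyz
  have h1 := Ideal.Quotient.eq.1 hyz
  rw [← map_sub, hmem] at h1
  rw [← hs y, ← hs z, RingHom.comp_apply, RingHom.comp_apply, Ideal.Quotient.eq, ← map_sub,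
    Ideal.mem_span_singleton]
  exact h1

lemma ne_of_deg {K : Type} [Field K] [NumberField K] {t : 𝓞 K} {g g' : (ZMod 7)[X]}
    {Q Q' : Ideal (𝓞 K)} (h : ∀ q : ℤ[X], aeval t q ∈ Q ↔
      g ∣ q.map (Int.castRingHom (ZMod 7))) (h' : ∀ q : ℤ[X], aeval t q ∈ Q' ↔
      g' ∣ q.map (Int.castRingHom (ZMod 7))) (hg : g ≠ 0) (hd : g.natDegree < g'.natDegree) :
    Q ≠ Q' := by
  rintro rfl
  obtain ⟨q, hq⟩ := map_surjective (Int.castRingHom (ZMod 7)) (ZMod.ringHom_surjective _) g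
  have := (h' q).1 ((h q).2 (by rw [hq]))
  rw [hq] at this
  exact not_dvd_of_natDegree_lt hg hd this

lemma coprime_of_notMem {R : Type*} [CommRing R] {Q : Ideal R} (hQ : Q.IsMaximal) {a : R}
    (ha : a ∉ Q) : IsCoprime (Ideal.span {a}) Q := by
  rw [Ideal.isCoprime_iff_sup_eq, sup_comm]
  refine hQ.1.2 _ (lt_of_le_of_ne le_sup_left fun h => ha ?_)
  rw [h]
  exact (le_sup_right : _ ≤ Q ⊔ Ideal.span {a}) (Ideal.mem_span_singleton_self a)

lemma arith {a b c d : ℕ} (h : a * b * c * d = 7 ^ 8) (ha : 7 ≤ a) (hb : 7 ^ 3 ≤ b)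
    (hc : 7 ^ 4 ≤ c) : a = 7 ∧ b = 7 ^ 3 ∧ c = 7 ^ 4 ∧ d = 1 := by
  have hd : 1 ≤ d := by
    rcases Nat.eq_zero_or_pos d with rfl | h'
    · simp at h
    · exact h'
  refine ⟨le_antisymm ?_ ha, le_antisymm ?_ hb, le_antisymm ?_ hc, le_antisymm ?_ hd⟩ <;>
    by_contra! hlt
  · have : (7 + 1) * 7 ^ 3 * 7 ^ 4 * 1 ≤ a * b * c * d := by gcongr; exact hlt
    omega
  · have : 7 * (7 ^ 3 + 1) * 7 ^ 4 * 1 ≤ a * b * c * d := by gcongr; exact hlt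
    omega
  · have : 7 * 7 ^ 3 * (7 ^ 4 + 1) * 1 ≤ a * b * c * d := by gcongr; exact hlt
    omega
  · have : 7 * 7 ^ 3 * 7 ^ 4 * (1 + 1) ≤ a * b * c * d := by gcongr; exact hlt
    omega

/-- the element `x³ - x - 1` -/
noncomputable def al : ℤ[X] := X ^ 3 - X - 1

lemma al_map_monic : (al.map (Int.castRingHom (ZMod 7))).Monic := by
  apply Monic.map; unfold al; monicity!

lemma al_map_natDegree : (al.map (Int.castRingHom (ZMod 7))).natDegree = 3 := by
  rw [Monic.natDegree_map (by unfold al; monicity!)]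
  unfold al; compute_degree!

theorem main (K : Type) [Field K] [NumberField K] (t : 𝓞 K)
    (ht : aeval (algebraMap (𝓞 K) K t) rK = 0)
    (hadj : Algebra.adjoin ℚ {algebraMap (𝓞 K) K t} = ⊤) :
      ((Ideal.span {t ^ 3 - t - 1}).IsPrime ∧
        Ideal.absNorm (Ideal.span {t ^ 3 - t - 1}) = 7 ∧
        ∃ P₂ P₃ : Ideal (𝓞 K),
          P₂.IsPrime ∧ P₃.IsPrime ∧
          Ideal.absNorm P₂ = 7 ^ 3 ∧ Ideal.absNorm P₃ = 7 ^ 4 ∧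
          Ideal.span {(7 : 𝓞 K)} =
            Ideal.span {t ^ 3 - t - 1} * P₂ * P₃) := by
  have hrKm : rK.Monic := by rw [← rZ_map]; exact rZ_monic.map _
  have hminQ : minpoly ℚ (algebraMap (𝓞 K) K t) = rK :=
    (minpoly.eq_of_irreducible_of_monic rK_irr ht hrKm).symm
  have hfin : Module.finrank ℤ (𝓞 K) = 8 := by
    rw [RingOfIntegers.rank, ← (Field.primitive_element_iff_minpoly_natDegree_eq ℚ
      (algebraMap (𝓞 K) K t)).1 ?_, hminQ, ← rZ_map, rZ_monic.natDegree_map, rZ_natDegree]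
    rw [← IntermediateField.toSubalgebra_inj, IntermediateField.top_toSubalgebra, ← hadj]
    exact IntermediateField.adjoin_simple_toSubalgebra_of_isAlgebraic
      (Algebra.IsAlgebraic.isAlgebraic _)
  have hker : ∀ q : ℤ[X], aeval t q = 0 → rZ ∣ q := by
    intro q hq
    have h1 : aeval (algebraMap (𝓞 K) K t) (q.map (algebraMap ℤ ℚ)) = 0 := by
      rw [aeval_map_algebraMap, aeval_algebraMap_apply, hq, map_zero]
    have h2 := minpoly.dvd ℚ _ h1
    rw [hminQ, ← rZ_map] at h2
    exact (map_dvd_map _ (algebraMap ℤ ℚ).injective_int rZ_monic).1 h2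
  have hrt : aeval t rZ = 0 := by
    apply RingOfIntegers.coe_injective
    rw [map_zero, ← aeval_algebraMap_apply, ← aeval_map_algebraMap ℚ, rZ_map, ht]
  obtain ⟨Q1, m1, e1, n1⟩ := exists_over K t hker g1 g1_irr
    (by rw [rZ_map7]; exact ⟨g2 * g3, by ring⟩)
  obtain ⟨Q2, m2, e2, n2⟩ := exists_over K t hker g2 g2_irr
    (by rw [rZ_map7]; exact ⟨g1 * g3, by ring⟩)
  obtain ⟨Q3, m3, e3, n3⟩ := exists_over K t hker g3 g3_irr
    (by rw [rZ_map7]; exact ⟨g1 * g2, by ring⟩)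
  rw [g1_natDegree, pow_one] at n1
  rw [g2_natDegree] at n2
  rw [g3_natDegree] at n3
  have h12 : Q1 ≠ Q2 := ne_of_deg e1 e2 g1_monic.ne_zero (by rw [g1_natDegree, g2_natDegree]; norm_num)
  have h13 : Q1 ≠ Q3 := ne_of_deg e1 e3 g1_monic.ne_zero (by rw [g1_natDegree, g3_natDegree]; norm_num)
  have h23 : Q2 ≠ Q3 := ne_of_deg e2 e3 g2_monic.ne_zero (by rw [g2_natDegree, g3_natDegree]; norm_num)
  have h7 : ∀ {g : (ZMod 7)[X]} {Q : Ideal (𝓞 K)}, (∀ q : ℤ[X], aeval t q ∈ Q ↔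
      g ∣ q.map (Int.castRingHom (ZMod 7))) → Q ∣ Ideal.span {(7 : 𝓞 K)} := by
    intro g Q h
    rw [Ideal.dvd_span_singleton]
    have := (h (7 : ℤ[X])).2 (by
      rw [Polynomial.map_ofNat, ← C_ofNat 7, show (OfNat.ofNat 7 : ZMod 7) = 0 from rfl, C_0]
      exact dvd_zero _)
    rwa [map_ofNat] at this
  have c12 : IsCoprime Q1 Q2 := Ideal.isCoprime_of_isMaximal h12
  have c13 : IsCoprime Q1 Q3 := Ideal.isCoprime_of_isMaximal h13
  have c23 : IsCoprime Q2 Q3 := Ideal.isCoprime_of_isMaximal h23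
  obtain ⟨D, hD⟩ := (c13.mul_left c23).mul_dvd (c12.mul_dvd (h7 e1) (h7 e2)) (h7 e3)
  have hN : Ideal.absNorm (Ideal.span {(7 : 𝓞 K)}) = 7 ^ 8 := by
    have := Ideal.absNorm_span_natCast (S := 𝓞 K) 7
    rw [hfin] at this
    exact_mod_cast this
  rw [hD, map_mul, map_mul, map_mul] at hN
  obtain ⟨a1, a2, a3, a4⟩ := arith hN n1 n2 n3
  rw [Ideal.absNorm_eq_one_iff] at a4
  rw [a4, Ideal.mul_top] at hD
  have hal : aeval t al = t ^ 3 - t - 1 := by simp [al]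
  have hα1 : t ^ 3 - t - 1 ∈ Q1 := by
    rw [← hal, e1]
    refine ⟨X ^ 2 - 2 * X + 3, ?_⟩
    have h7 : (7 : (ZMod 7)[X]) = 0 := by
      rw [← C_ofNat 7, show (OfNat.ofNat 7 : ZMod 7) = 0 from rfl, C_0]
    simp only [al, g1, Polynomial.map_sub,
      Polynomial.map_pow, Polynomial.map_X, Polynomial.map_one]
    linear_combination ((-1) * X ^ 0) * h7
  have hα2 : t ^ 3 - t - 1 ∉ Q2 := by
    rw [← hal, e2]
    intro h
    have h := eq_of_monic_of_dvd_of_natDegree_le g2_monic al_map_monic h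
      (by rw [al_map_natDegree, g2_natDegree])
    have h2 := congrArg (fun p => coeff p 2) h
    simp [al, g2, coeff_X, coeff_one] at h2
    revert h2; decide
  have hα3 : t ^ 3 - t - 1 ∉ Q3 := by
    rw [← hal, e3]
    exact not_dvd_of_natDegree_lt al_map_monic.ne_zero
      (by rw [al_map_natDegree, g3_natDegree]; norm_num)
  have hdiv : Ideal.span {t ^ 3 - t - 1} ∣ Q1 * Q2 * Q3 := by
    rw [← hD, Ideal.dvd_span_singleton, Ideal.mem_span_singleton]
    refine ⟨t ^ 7 - 4 * t ^ 6 + 11 * t ^ 4 - 8 * t ^ 3 - 8 * t ^ 2 + 9 * t - 3, ?_⟩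
    simp only [rZ, map_add, map_sub, map_mul, map_pow, aeval_X, map_one, map_ofNat] at hrt
    linear_combination (-(t ^ 2 - 2 * t - 4)) * hrt
  have hdiv1 := (coprime_of_notMem m2 hα2).dvd_of_dvd_mul_right
    ((coprime_of_notMem m3 hα3).dvd_of_dvd_mul_right hdiv)
  have hEq : Ideal.span {t ^ 3 - t - 1} = Q1 :=
    dvd_antisymm hdiv1 (Ideal.dvd_span_singleton.2 hα1)
  rw [hEq]
  exact ⟨m1.isPrime, a1, Q2, Q3, m2.isPrime, m3.isPrime, a2, a3, hD⟩

end StmtAux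

/-- `r(x)` is irreducible over `ℚ`; and if `K = ℚ[x]/(r(x))` (i.e. any
number field generated over `ℚ` by a root `t` of `r`, with `t` in the ring of
integers `𝓞_K`), then `(t³ − t − 1)` is a prime ideal of `𝓞_K` of absolute norm `7`,
and `(7) = 𝒫₁𝒫₂𝒫₃` with the `𝒫ᵢ` prime of absolute norms `7, 7³, 7⁴` respectively,
and `𝒫₁ = (t³ − t − 1)`. -/
theorem stmt_15 :
    Irreducible rK ∧
    ∀ (K : Type) [Field K] [NumberField K] (t : NumberField.RingOfIntegers K),
      aeval (algebraMap (NumberField.RingOfIntegers K) K t) rK = 0 →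
      Algebra.adjoin ℚ {algebraMap (NumberField.RingOfIntegers K) K t} = ⊤ →
      ((Ideal.span {t ^ 3 - t - 1}).IsPrime ∧
        Ideal.absNorm (Ideal.span {t ^ 3 - t - 1}) = 7 ∧
        ∃ P₂ P₃ : Ideal (NumberField.RingOfIntegers K),
          P₂.IsPrime ∧ P₃.IsPrime ∧
          Ideal.absNorm P₂ = 7 ^ 3 ∧ Ideal.absNorm P₃ = 7 ^ 4 ∧
          Ideal.span {(7 : NumberField.RingOfIntegers K)} =
            Ideal.span {t ^ 3 - t - 1} * P₂ * P₃) := by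
  exact ⟨StmtAux.rK_irr, fun K _ _ t ht hadj => StmtAux.main K t ht hadj⟩
end

section
/- Let ω be a primitive cube root of unity (so ω² + ω + 1 = 0) and ℤ[ω] the ring of Eisenstein integers. In PSL(2,ℤ[ω]), the elements represented by γ₀ = [[0,1],[−1,ω]] and γ₀' = [[0,−1],[1,ω]] are representatives of exactly two distinct conjugacy classes, and every element of PSL(2,ℤ[ω]) that is represented by a matrix in SL(2,ℤ[ω]) of trace ω or −ω is conjugate in PSL(2,ℤ[ω]) to the class of γ₀ or to the class of γ₀'. -/
open Polynomial

/-- The ring `ℤ[ω]` of Eisenstein integers, realized as `ℤ[x]/(x² + x + 1)`. -/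
abbrev Eisenstein : Type := AdjoinRoot (X ^ 2 + X + 1 : ℤ[X])

/-- A primitive cube root of unity `ω` (satisfying `ω² + ω + 1 = 0`) in `ℤ[ω]`. -/
noncomputable def ω : Eisenstein := AdjoinRoot.root _

/-- `SL(2, ℤ[ω])`: 2×2 matrices of determinant 1 over the Eisenstein integers. -/
abbrev SL2E := Matrix.SpecialLinearGroup (Fin 2) Eisenstein

/-- `PSL(2, ℤ[ω])`: the quotient of `SL(2, ℤ[ω])` by its center `{±I}`. -/
abbrev PSL2E := SL2E ⧸ Subgroup.center SL2E

/-- `γ₀ = [[0,1],[−1,ω]]` as an element of `SL(2, ℤ[ω])`. -/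
noncomputable def γ₀ : SL2E :=
  ⟨!![0, 1; -1, ω], by simp [Matrix.det_fin_two_of]⟩

/-- `γ₀' = [[0,−1],[1,ω]]` as an element of `SL(2, ℤ[ω])`. -/
noncomputable def γ₀' : SL2E :=
  ⟨!![0, -1; 1, ω], by simp [Matrix.det_fin_two_of]⟩


lemma omega_rel : ω ^ 2 + ω + 1 = 0 := by
  have h := AdjoinRoot.eval₂_root (X ^ 2 + X + 1 : ℤ[X])
  simpa [ω] using h

lemma exists_coords (x : Eisenstein) : ∃ a b : ℤ, x = a + b * ω := by
  obtain ⟨p, rfl⟩ := AdjoinRoot.mk_surjective x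
  induction p using Polynomial.induction_on with
  | C a => exact ⟨a, 0, by simp⟩
  | add p q hp hq =>
    obtain ⟨a, b, h⟩ := hp
    obtain ⟨c, d, h'⟩ := hq
    exact ⟨a + c, b + d, by rw [map_add, h, h']; push_cast; ring⟩
  | monomial n a h =>
    obtain ⟨c, d, h⟩ := h
    refine ⟨-d, c - d, ?_⟩
    have e : (C a * X ^ (n + 1) : ℤ[X]) = C a * X ^ n * X := by ring
    rw [e, map_mul, h, AdjoinRoot.mk_X]
    change _ * ω = _
    push_cast
    linear_combination (d : Eisenstein) * omega_rel

/-- The complex embedding. -/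
noncomputable def phi : Eisenstein →+* ℂ :=
  AdjoinRoot.lift (Int.castRingHom ℂ) (⟨-1 / 2, √3 / 2⟩ : ℂ) (by
    have h : √3 ^ 2 = (3 : ℝ) := Real.sq_sqrt (by norm_num)
    simp only [eval₂_add, eval₂_pow, eval₂_X, eval₂_one]
    apply Complex.ext
    · simp [pow_two]; nlinarith
    · simp [pow_two]; ring)

lemma phi_omega : phi ω = (⟨-1 / 2, √3 / 2⟩ : ℂ) := by
  simp [phi, ω]

lemma normSq_coords (x y : ℝ) :
    Complex.normSq ((x : ℂ) + y * phi ω) = x ^ 2 - x * y + y ^ 2 := by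
  have h : √3 ^ 2 = (3 : ℝ) := Real.sq_sqrt (by norm_num)
  rw [phi_omega, Complex.normSq_apply]
  simp
  linear_combination (y ^ 2 / 4) * h

lemma normSq_phi (a b : ℤ) :
    Complex.normSq (phi (a + b * ω)) = ((a ^ 2 - a * b + b ^ 2 : ℤ) : ℝ) := by
  have := normSq_coords a b
  simpa using this

lemma quad_zero {a b : ℤ} (h : a ^ 2 - a * b + b ^ 2 = 0) : a = 0 ∧ b = 0 := by
  constructor <;> apply pow_eq_zero_iff (two_ne_zero) |>.1 <;>
    nlinarith [sq_nonneg (2 * a - b), sq_nonneg (2 * b - a), sq_nonneg a, sq_nonneg b]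

lemma coords_zero {a b : ℤ} (h : (a + b * ω : Eisenstein) = 0) : a = 0 ∧ b = 0 := by
  apply quad_zero
  have := normSq_phi a b
  rw [h] at this
  simp only [map_zero] at this
  exact_mod_cast this.symm

lemma phi_ne_zero {x : Eisenstein} (h : x ≠ 0) : phi x ≠ 0 := by
  intro h0
  obtain ⟨a, b, rfl⟩ := exists_coords x
  have := normSq_phi a b
  rw [h0] at this
  simp only [map_zero] at this
  obtain ⟨rfl, rfl⟩ := quad_zero (a := a) (b := b) (by exact_mod_cast this.symm)
  simp at h

lemma exists_int_norm (x : Eisenstein) : ∃ n : ℤ, Complex.normSq (phi x) = n := by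
  obtain ⟨a, b, rfl⟩ := exists_coords x
  exact ⟨_, normSq_phi a b⟩

lemma unit_form {x : Eisenstein} (h : Complex.normSq (phi x) = 1) :
    ∃ u : Eisenstein, x * u ^ 2 = 1 ∨ x * u ^ 2 = -1 := by
  obtain ⟨a, b, rfl⟩ := exists_coords x
  rw [normSq_phi] at h
  have h1 : a ^ 2 - a * b + b ^ 2 = 1 := by exact_mod_cast h
  have ha : a ≤ 1 := by nlinarith [sq_nonneg (2 * b - a)]
  have ha' : -1 ≤ a := by nlinarith [sq_nonneg (2 * b - a)]
  have hb : b ≤ 1 := by nlinarith [sq_nonneg (2 * a - b)]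
  have hb' : -1 ≤ b := by nlinarith [sq_nonneg (2 * a - b)]
  have w := omega_rel
  have w3 : ω ^ 3 = 1 := by linear_combination (ω - 1) * w
  interval_cases a <;> interval_cases b <;> simp at h1
  · refine ⟨ω ^ 2, Or.inl ?_⟩
    push_cast
    linear_combination (-ω ^ 4) * w + (ω ^ 3 + 1) * w3
  · exact ⟨1, Or.inr (by simp)⟩
  · refine ⟨ω, Or.inr ?_⟩
    push_cast
    linear_combination -w3
  · refine ⟨ω, Or.inl ?_⟩
    push_cast
    linear_combination w3
  · exact ⟨1, Or.inl (by simp)⟩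
  · refine ⟨ω ^ 2, Or.inr ?_⟩
    push_cast
    linear_combination (ω ^ 4) * w - (ω ^ 3 + 1) * w3

lemma no_root (p : Eisenstein) : p ^ 2 - ω * p + 1 ≠ 0 := by
  intro h
  obtain ⟨a, b, rfl⟩ := exists_coords p
  have h2 : (((a ^ 2 - b ^ 2 + b + 1 : ℤ) : Eisenstein)
      + ((2 * a * b - b ^ 2 - a + b : ℤ) : Eisenstein) * ω) = 0 := by
    rw [← h]
    push_cast
    linear_combination (b - b ^ 2 : Eisenstein) * omega_rel
  obtain ⟨e1, e2⟩ := coords_zero h2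
  have q1 : (b ^ 2 - b) % 2 = 0 := by
    rcases Int.emod_two_eq_zero_or_one b with hb | hb <;> simp [pow_two, Int.sub_emod, Int.mul_emod, hb]
  have q2 : (a ^ 2 - a) % 2 = 0 := by
    rcases Int.emod_two_eq_zero_or_one a with hb | hb <;> simp [pow_two, Int.sub_emod, Int.mul_emod, hb]
  have e3 : 2 * (a * b) - (b ^ 2 - b) - a = 0 := by linarith
  generalize a * b = c at e3
  omega

lemma cover (x y : ℝ) : ∃ a b : ℤ,
    (x - a) ^ 2 - (x - a) * (y - b) + (y - b) ^ 2 ≤ 1 / 3 := by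
  have hx := Int.floor_le x
  have hx' := Int.lt_floor_add_one x
  have hy := Int.floor_le y
  have hy' := Int.lt_floor_add_one y
  obtain ⟨u, hu⟩ : ∃ u, u = x - ⌊x⌋ := ⟨_, rfl⟩
  obtain ⟨v, hv⟩ : ∃ v, v = y - ⌊y⌋ := ⟨_, rfl⟩
  have u0 : 0 ≤ u := by linarith
  have u1 : u ≤ 1 := by linarith
  have v0 : 0 ≤ v := by linarith
  have v1 : v ≤ 1 := by linarith
  by_contra hcon
  push Not at hcon
  have c00 := hcon ⌊x⌋ ⌊y⌋
  have c10 := hcon (⌊x⌋ + 1) ⌊y⌋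
  have c01 := hcon ⌊x⌋ (⌊y⌋ + 1)
  have c11 := hcon (⌊x⌋ + 1) (⌊y⌋ + 1)
  push_cast at c00 c10 c01 c11
  rw [← sub_sub] at c10 c11
  rw [← sub_sub] at c01 c11
  rw [← hu, ← hv] at c00 c10 c01 c11
  rcases le_total v u with h | h
  · have k1 := mul_le_mul_of_nonneg_left c00.le (sub_nonneg.2 u1)
    have k2 := mul_le_mul_of_nonneg_left c10.le (sub_nonneg.2 h)
    have k3 := mul_le_mul_of_nonneg_left c11.le v0
    have e1 : v = 1 / 3 := by nlinarith [sq_nonneg (u - 2 / 3 - (v - 1 / 3) / 2), sq_nonneg (v - 1 / 3)]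
    have e2 : u = 2 / 3 := by
      subst e1
      nlinarith [sq_nonneg (u - 2 / 3)]
    rw [e1, e2] at c00
    norm_num at c00
  · have k1 := mul_le_mul_of_nonneg_left c00.le (sub_nonneg.2 v1)
    have k2 := mul_le_mul_of_nonneg_left c01.le (sub_nonneg.2 h)
    have k3 := mul_le_mul_of_nonneg_left c11.le u0
    have e1 : u = 1 / 3 := by nlinarith [sq_nonneg (v - 2 / 3 - (u - 1 / 3) / 2), sq_nonneg (u - 1 / 3)]
    have e2 : v = 2 / 3 := by
      subst e1
      nlinarith [sq_nonneg (v - 2 / 3)]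
    rw [e1, e2] at c00
    norm_num at c00

lemma cover_C (w : ℂ) : ∃ t : Eisenstein, Complex.normSq (w - phi t) ≤ 1 / 3 := by
  have h3 : √3 ≠ 0 := by positivity
  obtain ⟨a, b, h⟩ := cover (w.re + w.im / √3) (2 * w.im / √3)
  refine ⟨a + b * ω, ?_⟩
  have e : w - phi (a + b * ω) = (((w.re + w.im / √3 - a : ℝ) : ℂ)
      + ((2 * w.im / √3 - b : ℝ) : ℂ) * phi ω) := by
    have : w = ((w.re + w.im / √3 : ℝ) : ℂ) + ((2 * w.im / √3 : ℝ) : ℂ) * phi ω := by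
      rw [phi_omega]
      apply Complex.ext
      · simp; ring
      · simp; field_simp
    conv_lhs => rw [this]
    simp only [map_add, map_mul, map_intCast]
    push_cast
    ring
  rw [e, normSq_coords]
  exact h

/-- A matrix of determinant one from its entries. -/
noncomputable def mkSL (a b c d : Eisenstein) (h : a * d - b * c = 1) : SL2E :=
  ⟨!![a, b; c, d], by rw [Matrix.det_fin_two_of, h]⟩

lemma coe_mkSL (a b c d : Eisenstein) (h : a * d - b * c = 1) :
    (mkSL a b c d h : Matrix (Fin 2) (Fin 2) Eisenstein) = !![a, b; c, d] := rfl

lemma coe_gamma : (γ₀ : Matrix (Fin 2) (Fin 2) Eisenstein) = !![0, 1; -1, ω] := rfl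

lemma coe_gamma' : (γ₀' : Matrix (Fin 2) (Fin 2) Eisenstein) = !![0, -1; 1, ω] := rfl

lemma isConj_of {x y : SL2E} (g : SL2E) (h : g * x = y * g) : IsConj x y :=
  isConj_iff.2 ⟨g, by rw [h, mul_inv_cancel_right]⟩

/-- Translation followed by inversion. -/
noncomputable def step (t : Eisenstein) : SL2E := mkSL 0 (-1) 1 t (by ring)

lemma descend_ineq (z q r : Eisenstein) (hz : z ^ 2 + 4 * q * r = ω ^ 2 - 4)
    (hzr : Complex.normSq (phi z) ≤ 4 / 3 * Complex.normSq (phi r))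
    (hr : 2 ≤ Complex.normSq (phi r)) :
    Complex.normSq (phi q) < Complex.normSq (phi r) := by
  have hd : ‖phi (ω ^ 2 - 4)‖ ≤ 5 := by
    have hw : ‖phi ω‖ ^ 2 = 1 := by
      rw [← Complex.normSq_eq_norm_sq]
      have := normSq_coords 0 1
      simpa using this
    rw [map_sub, map_pow, map_ofNat]
    refine (norm_sub_le _ _).trans ?_
    rw [norm_pow, hw]
    norm_num
  have h4 : 4 * (‖phi q‖ * ‖phi r‖) ≤ 5 + ‖phi z‖ ^ 2 := by
    have : phi (4 * q * r) = phi (ω ^ 2 - 4) - phi z ^ 2 := by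
      rw [← hz]; simp
    have h := norm_sub_le (phi (ω ^ 2 - 4)) (phi z ^ 2)
    rw [← this, norm_pow] at h
    simp only [map_mul, map_ofNat, norm_mul, Complex.norm_ofNat] at h
    linarith
  rw [Complex.normSq_eq_norm_sq] at *
  rw [Complex.normSq_eq_norm_sq] at *
  by_contra hc
  push Not at hc
  have h5 : ‖phi r‖ ≤ ‖phi q‖ := by
    rwa [sq_le_sq₀ (norm_nonneg _) (norm_nonneg _)] at hc
  nlinarith [norm_nonneg (phi r), norm_nonneg (phi q)]

lemma unit_case (M : SL2E) (htr : M 0 0 + M 1 1 = ω) (u : Eisenstein)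
    (hu : M 1 0 * u ^ 2 = 1 ∨ M 1 0 * u ^ 2 = -1) : IsConj γ₀ M ∨ IsConj γ₀' M := by
  have hdet : M 0 0 * M 1 1 - M 0 1 * M 1 0 = 1 := by
    rw [← Matrix.det_fin_two]; exact M.2
  rcases hu with hu | hu
  · right
    apply isConj_of (mkSL u (M 0 0 * u) 0 (M 1 0 * u) (by linear_combination hu))
    ext i j
    fin_cases i <;> fin_cases j <;> simp [coe_gamma', coe_mkSL, Matrix.mul_apply, Fin.sum_univ_two]
    · linear_combination (-M 0 0 * u) * htr + u * hdet
    · linear_combination (-M 1 0 * u) * htr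
  · left
    apply isConj_of (mkSL u (-(M 0 0 * u)) 0 (-(M 1 0 * u)) (by linear_combination -hu))
    ext i j
    fin_cases i <;> fin_cases j <;> simp [coe_gamma, coe_mkSL, Matrix.mul_apply, Fin.sum_univ_two]
    · linear_combination (M 0 0 * u) * htr - u * hdet
    · linear_combination (M 1 0 * u) * htr

lemma conj_of_conj (M g : SL2E)
    (h : IsConj γ₀ (g * M * g⁻¹) ∨ IsConj γ₀' (g * M * g⁻¹)) : IsConj γ₀ M ∨ IsConj γ₀' M := by
  have h1 : IsConj (g * M * g⁻¹) M := (isConj_iff.2 ⟨g, rfl⟩).symm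
  exact h.imp (fun h => h.trans h1) (fun h => h.trans h1)

lemma main_conj (n : ℕ) : ∀ M : SL2E, M 0 0 + M 1 1 = ω →
    Complex.normSq (phi (M 1 0)) ≤ n → IsConj γ₀ M ∨ IsConj γ₀' M := by
  induction n with
  | zero =>
    intro M htr hn
    exfalso
    have hdet : M 0 0 * M 1 1 - M 0 1 * M 1 0 = 1 := by
      rw [← Matrix.det_fin_two]; exact M.2
    have h0 : phi (M 1 0) = 0 := by
      rw [← Complex.normSq_eq_zero]
      exact le_antisymm (by simpa using hn) (Complex.normSq_nonneg _)
    have h1 : M 1 0 = 0 := by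
      by_contra h
      exact phi_ne_zero h h0
    rw [h1] at hdet
    exact no_root (M 0 0) (by linear_combination M 0 0 * htr - hdet)
  | succ n ih =>
    intro M htr hn
    by_cases hle : Complex.normSq (phi (M 1 0)) ≤ n
    · exact ih M htr hle
    push Not at hle
    obtain ⟨k, hk⟩ := exists_int_norm (M 1 0)
    have hk1 : k = n + 1 := by
      rw [hk] at hn hle
      have a1 : k ≤ n + 1 := by exact_mod_cast hn
      have a2 : (n : ℤ) < k := by exact_mod_cast hle
      omega
    have hk2 : Complex.normSq (phi (M 1 0)) = n + 1 := by rw [hk, hk1]; push_cast; ring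
    rcases Nat.eq_zero_or_pos n with rfl | hnpos
    · obtain ⟨u, hu⟩ := unit_form (x := M 1 0) (by simpa using hk2)
      exact unit_case M htr u hu
    have hr2 : 2 ≤ Complex.normSq (phi (M 1 0)) := by
      rw [hk2]
      have : (1 : ℝ) ≤ n := by exact_mod_cast hnpos
      linarith
    have hr0 : phi (M 1 0) ≠ 0 := by
      intro h; rw [h] at hr2; norm_num at hr2
    obtain ⟨t, ht⟩ := cover_C (phi (M 1 1 - M 0 0) / (2 * phi (M 1 0)))
    have hdet : M 0 0 * M 1 1 - M 0 1 * M 1 0 = 1 := by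
      rw [← Matrix.det_fin_two]; exact M.2
    apply conj_of_conj M (step t)
    set Mc : SL2E := (step t) * M * (step t)⁻¹ with hMc
    have e00 : Mc 0 0 = M 1 1 - t * M 1 0 := by
      simp [hMc, step, coe_mkSL, Matrix.mul_apply, Matrix.vecMul, dotProduct, Fin.sum_univ_two, Matrix.SpecialLinearGroup.coe_inv, Matrix.adjugate_fin_two]
      try ring
    have e11 : Mc 1 1 = M 0 0 + t * M 1 0 := by
      simp [hMc, step, coe_mkSL, Matrix.mul_apply, Matrix.vecMul, dotProduct, Fin.sum_univ_two, Matrix.SpecialLinearGroup.coe_inv, Matrix.adjugate_fin_two]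
      try ring
    have e10 : Mc 1 0 = -(M 0 1 + t * (M 1 1 - M 0 0) - t ^ 2 * M 1 0) := by
      simp [hMc, step, coe_mkSL, Matrix.mul_apply, Matrix.vecMul, dotProduct, Fin.sum_univ_two, Matrix.SpecialLinearGroup.coe_inv, Matrix.adjugate_fin_two]
      try ring
    apply ih Mc
    · rw [e00, e11, ← htr]; ring
    · have hlt : Complex.normSq (phi (Mc 1 0)) < Complex.normSq (phi (M 1 0)) := by
        rw [e10, map_neg, Complex.normSq_neg]
        apply descend_ineq (M 1 1 - M 0 0 - 2 * t * M 1 0) _ _ _ _ hr2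
        · rw [← htr]
          linear_combination (-4) * hdet
        · have e : phi (M 1 1 - M 0 0 - 2 * t * M 1 0) =
              (phi (M 1 1 - M 0 0) / (2 * phi (M 1 0)) - phi t) * (2 * phi (M 1 0)) := by
            field_simp
            simp only [map_sub, map_mul, map_ofNat]
            ring
          rw [e, Complex.normSq_mul, Complex.normSq_mul]
          have : Complex.normSq 2 = 4 := by simp; norm_num
          rw [this]
          nlinarith [Complex.normSq_nonneg (phi (M 1 0))]
      obtain ⟨l, hl⟩ := exists_int_norm (Mc 1 0)
      rw [hl, hk, hk1] at hlt
      have : l < n + 1 := by exact_mod_cast hlt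
      rw [hl]
      have : l ≤ n := by omega
      exact_mod_cast this

/-- Reduction modulo a prime above 7. -/
noncomputable def red : Eisenstein →+* ZMod 7 :=
  AdjoinRoot.lift (Int.castRingHom (ZMod 7)) 2 (by
    simp only [eval₂_add, eval₂_pow, eval₂_X, eval₂_one]
    decide)

lemma red_omega : red ω = 2 := by simp [red, ω]

lemma not_conj : ¬ IsConj (QuotientGroup.mk γ₀ : PSL2E) (QuotientGroup.mk γ₀' : PSL2E) := by
  rw [isConj_iff]
  rintro ⟨c, hc⟩
  obtain ⟨g, rfl⟩ := QuotientGroup.mk_surjective c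
  rw [mul_inv_eq_iff_eq_mul, ← QuotientGroup.mk_mul, ← QuotientGroup.mk_mul, QuotientGroup.eq,
    Matrix.SpecialLinearGroup.mem_center_iff] at hc
  obtain ⟨z, hz, hc⟩ := hc
  have hm : ((γ₀' * g : SL2E) : Matrix (Fin 2) (Fin 2) Eisenstein) =
      ((g * γ₀ : SL2E) : Matrix (Fin 2) (Fin 2) Eisenstein) * Matrix.scalar (Fin 2) z := by
    rw [hc, ← Matrix.SpecialLinearGroup.coe_mul]
    rw [mul_inv_cancel_left]
  have hdet : g 0 0 * g 1 1 - g 0 1 * g 1 0 = 1 := by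
    rw [← Matrix.det_fin_two]; exact g.2
  have h00 := congrArg red (congrFun (congrFun hm 0) 0)
  have h01 := congrArg red (congrFun (congrFun hm 0) 1)
  have h10 := congrArg red (congrFun (congrFun hm 1) 0)
  have h11 := congrArg red (congrFun (congrFun hm 1) 1)
  have hdet := congrArg red hdet
  have hz := congrArg red hz
  simp [coe_gamma, coe_gamma', Matrix.mul_apply, Fin.sum_univ_two, red_omega] at h00 h01 h10 h11 hdet hz
  generalize red (g 0 0) = a at *
  generalize red (g 0 1) = b at *
  generalize red (g 1 0) = c at *
  generalize red (g 1 1) = d at *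
  generalize red z = z at *
  have hz1 : z = 1 ∨ z = -1 := by
    clear h00 h01 h10 h11
    revert z; decide
  rcases hz1 with rfl | rfl
  · have hsq : ∀ t : ZMod 7, t ^ 2 ≠ -1 := by decide
    apply hsq (a + b)
    have hc : c = b := by linear_combination h00
    have hd : d = -(a + 2 * b) := by linear_combination -h01
    rw [hc, hd] at hdet
    linear_combination -hdet
  · have h4 : ∀ t : ZMod 7, 4 * t = 0 → t = 0 := by decide
    have hc : c = -b := by linear_combination h00
    have hd : d = a + 2 * b := by linear_combination -h01
    have hb : b = 0 := h4 _ (by rw [hc, hd] at h10; linear_combination -h10)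
    have hd0 : d = 0 := h4 _ (by rw [hc] at h11; linear_combination h11)
    rw [hb, hd0] at hdet
    simp only [mul_zero, zero_mul, sub_zero] at hdet
    exact absurd hdet (by decide)

/-- In `PSL(2, ℤ[ω])`, the elements represented by `γ₀` and `γ₀'` lie in
two distinct conjugacy classes, and every element of `PSL(2, ℤ[ω])` represented by a
matrix in `SL(2, ℤ[ω])` of trace `ω` or `−ω` is conjugate to the class of `γ₀` or to
the class of `γ₀'`. -/
theorem stmt_18 :
    ¬ IsConj (QuotientGroup.mk γ₀ : PSL2E) (QuotientGroup.mk γ₀' : PSL2E) ∧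
    ∀ x : PSL2E,
      (∃ m : SL2E, (QuotientGroup.mk m : PSL2E) = x ∧
        (Matrix.trace (m : Matrix (Fin 2) (Fin 2) Eisenstein) = ω ∨
          Matrix.trace (m : Matrix (Fin 2) (Fin 2) Eisenstein) = -ω)) →
      (IsConj (QuotientGroup.mk γ₀ : PSL2E) x ∨
        IsConj (QuotientGroup.mk γ₀' : PSL2E) x) := by
  refine ⟨not_conj, ?_⟩
  have key : ∀ m : SL2E, Matrix.trace (m : Matrix (Fin 2) (Fin 2) Eisenstein) = ω →
      (IsConj (QuotientGroup.mk γ₀ : PSL2E) (QuotientGroup.mk m) ∨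
        IsConj (QuotientGroup.mk γ₀' : PSL2E) (QuotientGroup.mk m)) := by
    intro m hm
    rw [Matrix.trace_fin_two] at hm
    obtain ⟨n, hn⟩ := exists_nat_ge (Complex.normSq (phi (m 1 0)))
    exact (main_conj n m hm hn).imp
      (fun h => (QuotientGroup.mk' (Subgroup.center SL2E)).map_isConj h)
      (fun h => (QuotientGroup.mk' (Subgroup.center SL2E)).map_isConj h)
  rintro x ⟨m, rfl, h | h⟩
  · exact key m h
  · have e : (QuotientGroup.mk m : PSL2E) = QuotientGroup.mk (-m) := by
      rw [QuotientGroup.eq, Matrix.SpecialLinearGroup.mem_center_iff]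
      refine ⟨-1, by simp, ?_⟩
      have : m⁻¹ * -m = -1 := by simp
      rw [this]
      ext i j
      simp [Matrix.diagonal_apply, Matrix.one_apply]
      split_ifs <;> simp
    rw [e]
    apply key
    rw [Matrix.SpecialLinearGroup.coe_neg, Matrix.trace_neg, h, neg_neg]
end
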